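/- Assume r(F_{f,V}) > 0. Then r(φ_{G,f,w}) = x̃₀. -/

import Mathlib

/-!
Let `A(x)` be the `m × m` matrix with entries `α_{ij}(x)`, so that `M(x) = A(x) - 1`
(`transferMatrix`, `Mmat_eq`). Cutting a simple `w`-cycle after its first vertex shows that
`φ(x) = x^{f(w)} ∑ₙ Dₙ(w)`, where `Dₙ(v)` is the weight of the paths from `v` to `w` with `n`
interior vertices, none equal to `w` and the first and last vertices not weighted
(`returnWeight`, `phi_eq`). The number `Dₙ(v)` depends only on the class of `v`, and the vectors
`dₙ = (α_i Dₙ(V_i))_{1 ≤ i ≤ m}` satisfy `dₙ₊₁ = A dₙ`.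

Two facts about `x` carry the proof.

* If `φ(x) < ∞` and `x > 0`, then strong connectivity makes every `∑ₙ Dₙ(v)` finite and, for
  `v ≠ w`, positive; hence every `α_i(x)` is finite, so `x ≤ r(F)`. Moreover `det M(x) ≠ 0`: a
  vector `y` with `A y = y` satisfies `|y| ≤ C ∑ₙ dₙ`, and applying `A` repeatedly bounds `|y|` by
  `C` times the tails of a convergent series (`IsQuotient.of_phiSummable`).
* If `x < r(F)` and `det M` has no zero on `[0, x]`, then `φ(x) < ∞`. Call `A ≥ 0` *good* if
  `A v < v` for some `v > 0`; for good `A` a multiple of `v` dominates all partial sums of `∑ dₙ`.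
  Being good is an open condition. As long as `A - 1` is invertible it is also closed, because by
  a maximum principle it then says that the solution `y` of `(1 - A) y = (1, …, 1)` is
  nonnegative. Since `A(0) = 0` is good, connectedness of `[0, x]` gives that `A(x)` is good
  (`hasSuper_of_path`, `IsQuotient.phiSummable_of_hasSuper`).

As summability at `x` passes to all smaller arguments, the set of `x` with `φ(x) < ∞` contains
`[0, x̃₀)` and lies in `[0, x̃₀]`. The hypothesis `0 < rF f` also ensures that the supremum defining
`rF f` is taken over a bounded set: for an unbounded set the real `sSup` would be `0`.
-/

open Classical Filter Topology Finset
open scoped ENNReal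

universe u

variable {V : Type u}

/-- A walk with `n` edges in the graph with edge relation `E`. -/
def IsWalk (E : V → V → Prop) (n : ℕ) (γ : Fin (n + 1) → V) : Prop :=
  ∀ k : Fin n, E (γ k.castSucc) (γ k.succ)

/-- `f*(γ)` for a path of length `n + 1`, encoded by its `n + 2` vertices:
the sum of `f` over all vertices of the path except the last one. -/
def fStar (f : V → ℝ) (n : ℕ) (γ : Fin (n + 2) → V) : ℝ :=
  ∑ i : Fin (n + 1), f (γ i.castSucc)

/-- The set of simple `w`-cycles: paths `γ = (v_0, …, v_{n+1})` of length `n + 1 ≥ 1`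
with `v_0 = v_{n+1} = w` and `v_i ≠ w` for `0 < i < n + 1`. -/
def SimpleCycle (E : V → V → Prop) (w : V) : Set (Σ n : ℕ, Fin (n + 2) → V) :=
  {p | IsWalk E (p.1 + 1) p.2 ∧ p.2 0 = w ∧ p.2 (Fin.last (p.1 + 1)) = w ∧
    ∀ i : Fin (p.1 + 2), i ≠ 0 → i ≠ Fin.last (p.1 + 1) → p.2 i ≠ w}

/-- Paths of length `≥ 1` starting in the set `S` and ending at `w`. -/
def PathsTo (E : V → V → Prop) (S : Set V) (w : V) : Set (Σ n : ℕ, Fin (n + 2) → V) :=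
  {p | IsWalk E (p.1 + 1) p.2 ∧ p.2 0 ∈ S ∧ p.2 (Fin.last (p.1 + 1)) = w}

/-- The generating function `φ_{G,f,w}(x) = ∑_{γ ∈ C(G;w)} x^{f*(γ)}`, valued in `[0,∞]`. -/
noncomputable def phi (E : V → V → Prop) (f : V → ℝ) (w : V) (x : ℝ) : ℝ≥0∞ :=
  ∑' γ : SimpleCycle E w, ENNReal.ofReal (x ^ fStar f γ.1.1 γ.1.2)

/-- The real-valued generating function `φ_{G,f,w}(x)`. -/
noncomputable def phiR (E : V → V → Prop) (f : V → ℝ) (w : V) (x : ℝ) : ℝ :=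
  ∑' γ : SimpleCycle E w, x ^ fStar f γ.1.1 γ.1.2

/-- Summability of the family `(x^{f*(γ)})_{γ ∈ C(G;w)}`. -/
def phiSummable (E : V → V → Prop) (f : V → ℝ) (w : V) (x : ℝ) : Prop :=
  Summable fun γ : SimpleCycle E w => x ^ fStar f γ.1.1 γ.1.2

/-- The radius of convergence `r(φ_{G,f,w})`. -/
noncomputable def rPhi (E : V → V → Prop) (f : V → ℝ) (w : V) : ℝ :=
  sSup {x : ℝ | 0 ≤ x ∧ phiSummable E f w x}

/-- `A_S(x) = ∑_γ x^{f*(γ)}` over paths from `S` to `w`, valued in `[0,∞]`. -/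
noncomputable def Afun (E : V → V → Prop) (f : V → ℝ) (S : Set V) (w : V) (x : ℝ) : ℝ≥0∞ :=
  ∑' γ : PathsTo E S w, ENNReal.ofReal (x ^ fStar f γ.1.1 γ.1.2)

/-- Summability of the family `(x^{f*(γ)})_γ` over paths from `S` to `w`. -/
def ASummable (E : V → V → Prop) (f : V → ℝ) (S : Set V) (w : V) (x : ℝ) : Prop :=
  Summable fun γ : PathsTo E S w => x ^ fStar f γ.1.1 γ.1.2

/-- The radius of convergence `r(A_S)`. -/
noncomputable def rA (E : V → V → Prop) (f : V → ℝ) (S : Set V) (w : V) : ℝ :=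
  sSup {x : ℝ | 0 ≤ x ∧ ASummable E f S w x}

/-- `α_S(x) = ∑_{v ∈ S} x^{f(v)}`, valued in `[0,∞]`. -/
noncomputable def alphaE (f : V → ℝ) (S : Set V) (x : ℝ) : ℝ≥0∞ :=
  ∑' v : S, ENNReal.ofReal (x ^ f v)

/-- `α_S(x) = ∑_{v ∈ S} x^{f(v)}`, as a real number (when summable). -/
noncomputable def alphaR (f : V → ℝ) (S : Set V) (x : ℝ) : ℝ :=
  ∑' v : S, x ^ f v.1

/-- Summability of the family `(x^{f(v)})_{v ∈ V}`. -/
def FSummable (f : V → ℝ) (x : ℝ) : Prop := Summable fun v : V => x ^ f v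

/-- The radius of convergence `r(F_{f,V})`. -/
noncomputable def rF (f : V → ℝ) : ℝ := sSup {x : ℝ | 0 ≤ x ∧ FSummable f x}

/-- The matrix `M(x)` with entries `α_{ij}(x) - δ_{ij}`, `1 ≤ i, j ≤ m`. -/
noncomputable def Mmat (f : V → ℝ) {m : ℕ} (P : Fin (m + 1) → Set V)
    (EH : Fin (m + 1) → Fin (m + 1) → Prop) (x : ℝ) : Matrix (Fin m) (Fin m) ℝ :=
  fun i j =>
    (if EH i.succ j.succ then alphaR f (P i.succ) x else 0) - if i = j then 1 else 0

/-- `x̃₀`, as in the paper: `r(F_{f,V})` if `M(x)` is invertible for all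
`0 ≤ x < r(F_{f,V})`, and `inf {x ∈ [0, r(F_{f,V})) : det M(x) = 0}` otherwise. -/
noncomputable def xtilde (f : V → ℝ) {m : ℕ} (P : Fin (m + 1) → Set V)
    (EH : Fin (m + 1) → Fin (m + 1) → Prop) : ℝ :=
  if ∀ x : ℝ, 0 ≤ x → x < rF f → (Mmat f P EH x).det ≠ 0 then rF f
  else sInf {x : ℝ | 0 ≤ x ∧ x < rF f ∧ (Mmat f P EH x).det = 0}

/-- Embedding of the indices `{1, …, ℓ}` into `{0, 1, …, m}`. -/
def embl {m : ℕ} (ℓ : ℕ) (hl : ℓ ≤ m) (i : Fin ℓ) : Fin (m + 1) :=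
  ⟨i.1 + 1, by have := i.isLt; omega⟩

/-- The `ℓ × ℓ` matrix `C(x)` with entries `α_{ij}(x) - δ_{ij}`, `1 ≤ i, j ≤ ℓ`. -/
noncomputable def Cmat (f : V → ℝ) {m : ℕ} (ℓ : ℕ) (hl : ℓ ≤ m) (P : Fin (m + 1) → Set V)
    (EH : Fin (m + 1) → Fin (m + 1) → Prop) (x : ℝ) : Matrix (Fin ℓ) (Fin ℓ) ℝ :=
  fun i j =>
    (if EH (embl ℓ hl i) (embl ℓ hl j) then alphaR f (P (embl ℓ hl i)) x else 0) -
      if i = j then 1 else 0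

/-- `ζ(x) = α_{ℓ+1}(x) + … + α_{m-1}(x)`. -/
noncomputable def zeta (f : V → ℝ) {m : ℕ} (ℓ : ℕ) (P : Fin (m + 1) → Set V) (x : ℝ) : ℝ :=
  ∑ k ∈ Finset.univ.filter (fun k : Fin (m + 1) => ℓ < k.1 ∧ k.1 < m), alphaR f (P k) x

/-- `F_{f,V,V_i}(x) = ∑_{ℓ+1 ≤ k ≤ m, (V_i,V_k) ∈ E(H)} α_k(x)`. -/
noncomputable def FfVclass (f : V → ℝ) {m : ℕ} (ℓ : ℕ) (P : Fin (m + 1) → Set V)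
    (EH : Fin (m + 1) → Fin (m + 1) → Prop) (i : Fin (m + 1)) (x : ℝ) : ℝ :=
  ∑ k ∈ Finset.univ.filter (fun k : Fin (m + 1) => ℓ < k.1 ∧ EH i k), alphaR f (P k) x

/-- The vector `(-α_1(x) F_{f,V,V_1}(x), …, -α_ℓ(x) F_{f,V,V_ℓ}(x))`. -/
noncomputable def uVec (f : V → ℝ) {m : ℕ} (ℓ : ℕ) (hl : ℓ ≤ m) (P : Fin (m + 1) → Set V)
    (EH : Fin (m + 1) → Fin (m + 1) → Prop) (x : ℝ) : Fin ℓ → ℝ :=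
  fun j => -(alphaR f (P (embl ℓ hl j)) x * FfVclass f ℓ P EH (embl ℓ hl j) x)

/-- The vector `(-α_{10}(x), …, -α_{ℓ0}(x))`. -/
noncomputable def aVec (f : V → ℝ) {m : ℕ} (ℓ : ℕ) (hl : ℓ ≤ m) (P : Fin (m + 1) → Set V)
    (EH : Fin (m + 1) → Fin (m + 1) → Prop) (x : ℝ) : Fin ℓ → ℝ :=
  fun j => -(if EH (embl ℓ hl j) 0 then alphaR f (P (embl ℓ hl j)) x else 0)

/-! ### Nonnegative matrices with a strict supersolution -/

/-- A positive vector `v` with `A v < v` in every coordinate exists. For `A ≥ 0` this means that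
the spectral radius of `A` is less than `1`. -/
def HasSuper {m : ℕ} (A : Matrix (Fin m) (Fin m) ℝ) : Prop :=
  ∃ v : Fin m → ℝ, (∀ i, 0 < v i) ∧ ∀ i, ∑ j, A i j * v j < v i

/-- Maximum principle: `A y ≤ y` forces `0 ≤ y`. Look at the index minimizing `y i / v i`. -/
lemma nonneg_of_hasSuper {m : ℕ} {A : Matrix (Fin m) (Fin m) ℝ} (hA : ∀ i j, 0 ≤ A i j)
    (h : HasSuper A) {y : Fin m → ℝ} (hy : ∀ i, ∑ j, A i j * y j ≤ y i) (i : Fin m) :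
    0 ≤ y i := by
  obtain ⟨v, hv, hAv⟩ := h
  obtain ⟨k, -, hk⟩ := Finset.exists_min_image Finset.univ (fun i => y i / v i) ⟨i, Finset.mem_univ i⟩
  have hmin : ∀ j, y k / v k * v j ≤ y j := fun j =>
    (le_div_iff₀ (hv j)).1 (hk j (Finset.mem_univ j))
  have key : 0 ≤ y k / v k := by
    by_contra! hneg
    have h1 : y k / v k * ∑ j, A k j * v j ≤ ∑ j, A k j * y j := by
      rw [Finset.mul_sum]
      refine Finset.sum_le_sum fun j _ => ?_
      calc y k / v k * (A k j * v j) = A k j * (y k / v k * v j) := by ring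
        _ ≤ _ := mul_le_mul_of_nonneg_left (hmin j) (hA k j)
    have h2 : y k / v k * v k = y k := div_mul_cancel₀ _ (hv k).ne'
    have h3 := mul_lt_mul_of_neg_left (hAv k) hneg
    linarith [hy k]
  exact (mul_nonneg key (hv i).le).trans (hmin i)

/-- The vector `y = (A - 1)⁻¹ (-1, …, -1)` solves `y = 1 + A y`, so it is itself a strict
supersolution as soon as it is nonnegative. The right-hand side is a closed condition on `A`. -/
lemma hasSuper_iff {m : ℕ} {A : Matrix (Fin m) (Fin m) ℝ} (hA : ∀ i j, 0 ≤ A i j)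
    (hdet : (A - 1).det ≠ 0) :
    HasSuper A ↔ ∀ i, 0 ≤ ((A - 1)⁻¹.mulVec (fun _ => -1)) i := by
  set y := (A - 1)⁻¹.mulVec (fun _ => -1) with hy
  have h1 : (A - 1).mulVec y = fun _ => -1 := by
    rw [hy, Matrix.mulVec_mulVec, Matrix.mul_nonsing_inv _ hdet.isUnit, Matrix.one_mulVec]
  have h2 : ∀ i, ∑ j, A i j * y j = y i - 1 := fun i => by
    have := congrFun h1 i
    rw [Matrix.sub_mulVec, Matrix.one_mulVec, Pi.sub_apply] at this
    have h3 : A.mulVec y i = ∑ j, A i j * y j := rfl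
    linarith
  refine ⟨fun h => nonneg_of_hasSuper hA h fun i => by linarith [h2 i], fun h => ⟨y, fun i => ?_,
    fun i => by linarith [h2 i]⟩⟩
  have : 0 ≤ ∑ j, A i j * y j := Finset.sum_nonneg fun j _ => mul_nonneg (hA i j) (h j)
  linarith [h2 i]

/-- Along a connected family with `A - 1` invertible, having a strict supersolution is both open and
closed, so it spreads from the point where `A = 0`. -/
lemma hasSuper_of_path {m : ℕ} {X : Type*} [TopologicalSpace X] [PreconnectedSpace X]
    (A : X → Matrix (Fin m) (Fin m) ℝ) (hc : Continuous A) (hA : ∀ t i j, 0 ≤ A t i j)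
    (hdet : ∀ t, (A t - 1).det ≠ 0) (t₀ : X) (h0 : A t₀ = 0) (t : X) : HasSuper (A t) := by
  have hclop : IsClopen {t | HasSuper (A t)} := by
    constructor
    · have : {t | HasSuper (A t)} =
          ⋂ i, {t | 0 ≤ ((A t - 1)⁻¹.mulVec (fun _ => -1)) i} := by
        ext t
        simp only [Set.mem_ofPred_eq, Set.mem_iInter]
        exact hasSuper_iff (hA t) (hdet t)
      rw [this]
      refine isClosed_iInter fun i => isClosed_le continuous_const ?_
      have hc1 : Continuous fun t => A t - 1 := hc.sub continuous_const
      have hinv : Continuous fun t => (A t - 1)⁻¹ := by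
        simp only [Matrix.inv_def, Ring.inverse_eq_inv']
        exact (hc1.matrix_det.inv₀ hdet).smul hc1.matrix_adjugate
      exact (continuous_apply i).comp (hinv.matrix_mulVec continuous_const)
    · rw [isOpen_iff_mem_nhds]
      rintro t ⟨v, hv, hlt⟩
      have : ∀ᶠ s in 𝓝 t, ∀ i, ∑ j, A s i j * v j < v i := by
        rw [Filter.eventually_all]
        intro i
        have hci : Continuous fun s => ∑ j, A s i j * v j :=
          continuous_finsetSum _ fun j _ => (hc.matrix_elem i j).mul continuous_const
        exact hci.continuousAt.eventually (gt_mem_nhds (hlt i))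
      filter_upwards [this] with s hs using ⟨v, hv, hs⟩
  have huniv := hclop.eq_univ ⟨t₀, (⟨fun _ => 1, fun _ => one_pos, fun i => by simp [h0]⟩ :
    HasSuper (A t₀))⟩
  exact (huniv ▸ Set.mem_univ t : t ∈ {t | HasSuper (A t)})

/-- If `A y = y`, then `|y| ≤ C ∑ₙ dₙ` for some `C`, and applying `A` to this bound `N` times
shifts the series by `N`; the tails tend to `0`, so `y = 0`. -/
lemma det_ne_zero_of_summable {m : ℕ} {A : Matrix (Fin m) (Fin m) ℝ} (hA : ∀ i j, 0 ≤ A i j)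
    (d : ℕ → Fin m → ℝ) (hs : ∀ i, Summable fun n => d n i)
    (hrec : ∀ n i, d (n + 1) i = ∑ j, A i j * d n j) (hpos : ∀ i, 0 < ∑' n, d n i) :
    (A - 1).det ≠ 0 := by
  intro hdet
  obtain ⟨y, hy0, hy⟩ := Matrix.exists_mulVec_eq_zero_iff.2 hdet
  refine hy0 (funext fun i => ?_)
  have hAy : ∀ i, ∑ j, A i j * y j = y i := fun i => by
    have := congrFun hy i
    rw [Matrix.sub_mulVec, Matrix.one_mulVec, Pi.sub_apply] at this
    have h3 : A.mulVec y i = ∑ j, A i j * y j := rfl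
    simp only [Pi.zero_apply] at this
    linarith
  have hC : ∃ C, ∀ i, |y i| ≤ C * ∑' n, d n i := by
    refine ⟨∑ i, |y i| / ∑' n, d n i, fun i => ?_⟩
    rw [← div_le_iff₀ (hpos i)]
    exact Finset.single_le_sum (f := fun i => |y i| / ∑' n, d n i)
      (fun i _ => div_nonneg (abs_nonneg _) (hpos i).le) (Finset.mem_univ i)
  obtain ⟨C, hC⟩ := hC
  have htail : ∀ N i, |y i| ≤ C * ∑' n, d (n + N) i := by
    intro N
    induction N with
    | zero => exact hC
    | succ N ih =>
      intro i
      have hsN : ∀ j, Summable fun n => d (n + N) j := fun j => (summable_nat_add_iff N).2 (hs j)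
      calc |y i| = |∑ j, A i j * y j| := by rw [hAy]
        _ ≤ ∑ j, A i j * |y j| := (Finset.abs_sum_le_sum_abs _ _).trans_eq
            (Finset.sum_congr rfl fun j _ => by rw [abs_mul, abs_of_nonneg (hA i j)])
        _ ≤ ∑ j, A i j * (C * ∑' n, d (n + N) j) :=
            Finset.sum_le_sum fun j _ => mul_le_mul_of_nonneg_left (ih j) (hA i j)
        _ = C * ∑ j, ∑' n, A i j * d (n + N) j := by
            rw [Finset.mul_sum]
            refine Finset.sum_congr rfl fun j _ => ?_
            rw [tsum_mul_left]; ring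
        _ = C * ∑' n, d (n + (N + 1)) i := by
            rw [← Summable.tsum_finsetSum fun j _ => (hsN j).mul_left _]
            simp only [← add_assoc, hrec]
  have hlim : Tendsto (fun N => C * ∑' n, d (n + N) i) atTop (𝓝 0) := by
    simpa using (tendsto_sum_nat_add fun n => d n i).const_mul C
  exact abs_eq_zero.1 (le_antisymm (ge_of_tendsto' hlim fun N => htail N i) (abs_nonneg _))

/-! ### Weights of first-return paths -/

/-- The total weight of the paths `(v, v₁, …, vₙ, w)` with `v₁, …, vₙ ≠ w`, where such a path has
weight `g v₁ ⋯ g vₙ`; the starting vertex `v` is not weighted and may be `w`. The recursion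
splits off `v₁`. -/
noncomputable def returnWeight (E : V → V → Prop) (w : V) (g : V → ℝ≥0∞) : ℕ → V → ℝ≥0∞
  | 0, v => if E v w then 1 else 0
  | n + 1, v => ∑' u, if E v u ∧ u ≠ w then g u * returnWeight E w g n u else 0

/-- The path `(v, v₁, …, vₙ, w)` is encoded by `γ = (v₁, …, vₙ, w)`. -/
lemma tsum_paths (E : V → V → Prop) (w : V) (g : V → ℝ≥0∞) (n : ℕ) (v : V) :
    (∑' γ : Fin (n + 1) → V, if E v (γ 0) ∧ IsWalk E n γ ∧ γ (Fin.last n) = w ∧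
      ∀ i : Fin n, γ i.castSucc ≠ w then ∏ i : Fin n, g (γ i.castSucc) else 0) =
    returnWeight E w g n v := by
  induction n generalizing v with
  | zero =>
    rw [← (Equiv.funUnique (Fin 1) V).symm.tsum_eq, tsum_eq_single w]
    · simp [returnWeight, IsWalk, uniqueElim]
    · intro u hu
      rw [if_neg]
      rintro ⟨-, -, h, -⟩
      exact hu (by simpa using h)
  | succ n ih =>
    rw [← (Fin.consEquiv fun _ : Fin (n + 2) => V).tsum_eq, ENNReal.tsum_prod', returnWeight]
    refine tsum_congr fun u => ?_
    split_ifs with hu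
    · have hu2 : ¬u = w := hu.2
      rw [← ih u, ← ENNReal.tsum_mul_left]
      refine tsum_congr fun δ => ?_
      rw [mul_ite, mul_zero]
      refine if_congr ?_ ?_ rfl
      · simp only [Fin.consEquiv_apply, Fin.cons_zero, IsWalk, Fin.forall_fin_succ (n := n),
          Fin.castSucc_zero, ← Fin.succ_castSucc, Fin.cons_succ,
          ← Fin.succ_last, hu.1, ne_eq, hu2, true_and, not_false_eq_true, and_assoc]
      · simp only [Fin.consEquiv_apply, Fin.cons_zero, Fin.prod_univ_succ (n := n),
          Fin.castSucc_zero, ← Fin.succ_castSucc, Fin.cons_succ]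
    · refine ENNReal.tsum_eq_zero.2 fun δ => if_neg ?_
      rintro ⟨h1, -, -, h2⟩
      exact hu ⟨by simpa using h1, by simpa using h2 0⟩

/-- A simple `w`-cycle is `w` followed by a path that returns to `w` for the first time at its
end. -/
lemma phi_eq (E : V → V → Prop) (f : V → ℝ) (hf : ∀ v, 0 < f v) (w : V) {x : ℝ} (hx : 0 ≤ x) :
    phi E f w x = ENNReal.ofReal (x ^ f w) *
      ∑' n, returnWeight E w (fun v => ENNReal.ofReal (x ^ f v)) n w := by
  rw [phi, tsum_subtype (SimpleCycle E w) fun p => ENNReal.ofReal (x ^ fStar f p.1 p.2),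
    ENNReal.tsum_sigma', ← ENNReal.tsum_mul_left]
  refine tsum_congr fun n => ?_
  rw [← tsum_paths, ← (Fin.consEquiv fun _ : Fin (n + 2) => V).tsum_eq, ENNReal.tsum_prod',
    tsum_eq_single w]
  · rw [← ENNReal.tsum_mul_left]
    refine tsum_congr fun δ => ?_
    have hw : ENNReal.ofReal (x ^ fStar f n (Fin.cons w δ)) = ENNReal.ofReal (x ^ f w) *
        ∏ i : Fin n, ENNReal.ofReal (x ^ f (δ i.castSucc)) := by
      rw [fStar, Real.rpow_sum_of_nonneg hx fun i _ => (hf _).le,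
        ENNReal.ofReal_prod_of_nonneg fun i _ => Real.rpow_nonneg hx _, Fin.prod_univ_succ]
      simp only [Fin.castSucc_zero, ← Fin.succ_castSucc, Fin.cons_succ, Fin.cons_zero]
    rw [Set.indicator_apply, mul_ite, mul_zero]
    change (if (⟨n, Fin.cons w δ⟩ : Σ n : ℕ, Fin (n + 2) → V) ∈ SimpleCycle E w then
      ENNReal.ofReal (x ^ fStar f n (Fin.cons w δ)) else 0) = _
    rw [hw]
    refine if_congr ?_ rfl rfl
    have hall : (∀ i : Fin (n + 2), i ≠ 0 → i ≠ Fin.last (n + 1) →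
        (Fin.cons w δ : Fin (n + 2) → V) i ≠ w) ↔ ∀ i : Fin n, δ i.castSucc ≠ w := by
      constructor
      · intro h i
        have := h i.castSucc.succ (Fin.succ_ne_zero _)
          (by rw [← Fin.succ_last]; exact fun h => i.castSucc_ne_last (Fin.succ_injective _ h))
        simpa using this
      · intro h i h0 hl
        obtain ⟨j, rfl⟩ := Fin.exists_succ_eq.2 h0
        have hj : j ≠ Fin.last n := fun h => hl (by rw [h, Fin.succ_last])
        obtain ⟨k, rfl⟩ := Fin.exists_castSucc_eq.2 hj
        simpa using h k
    change IsWalk E (n + 1) (Fin.cons w δ) ∧ (Fin.cons w δ : Fin (n + 2) → V) 0 = w ∧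
      (Fin.cons w δ : Fin (n + 2) → V) (Fin.last (n + 1)) = w ∧ _ ↔ _
    rw [hall]
    simp only [IsWalk, Fin.forall_fin_succ (n := n), Fin.castSucc_zero, ← Fin.succ_castSucc,
      Fin.cons_succ, Fin.cons_zero, ← Fin.succ_last, true_and, and_assoc]
  · intro u hu
    refine ENNReal.tsum_eq_zero.2 fun δ => Set.indicator_of_notMem ?_ _
    rintro ⟨-, h, -, -⟩
    exact hu (by simpa using h)

/-! ### Passing between real and extended nonnegative sums -/

lemma phiSummable_iff (E : V → V → Prop) (f : V → ℝ) (w : V) {x : ℝ} (hx : 0 ≤ x) :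
    phiSummable E f w x ↔ phi E f w x ≠ ∞ := by
  constructor
  · intro h
    exact h.tsum_ofReal_ne_top
  · intro h
    have := ENNReal.summable_toReal h
    unfold phiSummable
    simpa only [ENNReal.toReal_ofReal (Real.rpow_nonneg hx _)] using this

lemma fSummable_iff (f : V → ℝ) {x : ℝ} (hx : 0 ≤ x) :
    FSummable f x ↔ ∑' v, ENNReal.ofReal (x ^ f v) ≠ ∞ := by
  constructor
  · intro h
    exact Summable.tsum_ofReal_ne_top h
  · intro h
    have := ENNReal.summable_toReal h
    unfold FSummable
    simpa only [ENNReal.toReal_ofReal (Real.rpow_nonneg hx _)] using this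

lemma alphaR_eq (f : V → ℝ) (S : Set V) {x : ℝ} (hx : 0 ≤ x) :
    alphaR f S x = (alphaE f S x).toReal := by
  rw [alphaE, ENNReal.tsum_toReal_eq fun _ => ENNReal.ofReal_ne_top, alphaR]
  exact tsum_congr fun v => (ENNReal.toReal_ofReal (Real.rpow_nonneg hx _)).symm

lemma tsum_partition {k : ℕ} {P : Fin k → Set V} (hdisj : ∀ i j, i ≠ j → Disjoint (P i) (P j))
    (hcover : ∀ v, ∃ i, v ∈ P i) (h : V → ℝ≥0∞) :
    ∑' v, h v = ∑ i, ∑' v : P i, h v := by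
  have h1 : ∀ v, h v = ∑ i, (P i).indicator h v := by
    intro v
    obtain ⟨i, hi⟩ := hcover v
    rw [Finset.sum_eq_single i, Set.indicator_of_mem hi]
    · intro j _ hj
      exact Set.indicator_of_notMem (fun hv => (hdisj j i hj).le_bot ⟨hv, hi⟩) h
    · simp
  rw [tsum_congr h1, Summable.tsum_finsetSum fun _ _ => ENNReal.summable]
  exact Finset.sum_congr rfl fun i _ => (tsum_subtype (P i) h).symm

/-! ### Finiteness and positivity of the total weights -/

lemma returnWeight_congr (E : V → V → Prop) (w : V) (g : V → ℝ≥0∞) {v v' : V}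
    (h : ∀ u, E v u ↔ E v' u) (n : ℕ) : returnWeight E w g n v = returnWeight E w g n v' := by
  cases n <;> simp [returnWeight, h]

/-- The total weight of the paths from `v` to `w` without interior visit to `w`, of any length; as
in `returnWeight`, the endpoints are not weighted. -/
noncomputable def totalWeight (E : V → V → Prop) (w : V) (g : V → ℝ≥0∞) (v : V) : ℝ≥0∞ :=
  ∑' n, returnWeight E w g n v

lemma totalWeight_eq (E : V → V → Prop) (w : V) (g : V → ℝ≥0∞) (v : V) :
    totalWeight E w g v = (if E v w then 1 else 0) +
      ∑' u, if E v u ∧ u ≠ w then g u * totalWeight E w g u else 0 := by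
  rw [totalWeight, tsum_eq_zero_add' ENNReal.summable]
  congr 1
  simp only [returnWeight]
  rw [ENNReal.tsum_comm]
  refine tsum_congr fun u => ?_
  split_ifs
  · rw [ENNReal.tsum_mul_left, totalWeight]
  · simp

lemma totalWeight_ge (E : V → V → Prop) (w : V) (g : V → ℝ≥0∞) {v u : V} (h : E v u)
    (hu : u ≠ w) : g u * totalWeight E w g u ≤ totalWeight E w g v := by
  rw [totalWeight_eq E w g v]
  refine le_trans ?_ le_add_self
  refine le_trans ?_ (ENNReal.le_tsum u)
  rw [if_pos ⟨h, hu⟩]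

lemma totalWeight_ne_zero {E : V → V → Prop} {w : V} {g : V → ℝ≥0∞} (hg : ∀ v, g v ≠ 0)
    (hconn : ∀ u v : V, Relation.ReflTransGen E u v) {v : V} (hv : v ≠ w) :
    totalWeight E w g v ≠ 0 := by
  suffices h : v = w ∨ totalWeight E w g v ≠ 0 from h.resolve_left hv
  induction hconn v w using Relation.ReflTransGen.head_induction_on with
  | refl => exact Or.inl rfl
  | @head a c hac _ ih =>
    right
    by_cases hc : c = w
    · rw [totalWeight_eq, if_pos (hc ▸ hac)]
      simp
    · have h1 := totalWeight_ge E w g hac hc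
      exact fun h0 => mul_ne_zero (hg c) (ih hc |>.resolve_left hc) (le_antisymm (h0 ▸ h1) bot_le)

lemma totalWeight_ne_top {E : V → V → Prop} {w : V} {g : V → ℝ≥0∞} (hg : ∀ v, g v ≠ 0)
    (hconn : ∀ u v : V, Relation.ReflTransGen E u v) (hw : totalWeight E w g w ≠ ∞) (v : V) :
    totalWeight E w g v ≠ ∞ := by
  induction hconn w v with
  | refl => exact hw
  | @tail b c _ hbc ih =>
    by_cases hc : c = w
    · exact hc ▸ hw
    · intro h
      have := totalWeight_ge E w g hbc hc
      rw [h, ENNReal.mul_top (hg c)] at this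
      exact ih (top_le_iff.1 this)

/-- If `d₀ + C A v ≤ C v`, then induction on `N` bounds the partial sums of `∑ dₙ` by `C v`. -/
lemma tsum_ne_top_of_hasSuper {m : ℕ} {A : Matrix (Fin m) (Fin m) ℝ} (hA : ∀ i j, 0 ≤ A i j)
    (h : HasSuper A) (d : ℕ → Fin m → ℝ≥0∞) (h0 : ∀ i, d 0 i ≠ ∞)
    (hrec : ∀ n i, d (n + 1) i = ∑ j, ENNReal.ofReal (A i j) * d n j) (i : Fin m) :
    ∑' n, d n i ≠ ∞ := by
  obtain ⟨v, hv, hlt⟩ := h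
  -- The sum over `i` of the constants `d₀ᵢ / (v - A v)ᵢ` that work for a single coordinate.
  have hC : ∃ C, 0 ≤ C ∧ ∀ i, (d 0 i).toReal + C * ∑ j, A i j * v j ≤ C * v i := by
    have hterm : ∀ i, 0 ≤ (d 0 i).toReal / (v i - ∑ j, A i j * v j) := fun i =>
      div_nonneg ENNReal.toReal_nonneg (sub_nonneg.2 (hlt i).le)
    refine ⟨∑ i, (d 0 i).toReal / (v i - ∑ j, A i j * v j), Finset.sum_nonneg fun i _ => hterm i,
      fun i => ?_⟩
    have h1 := Finset.single_le_sum (fun i _ => hterm i) (Finset.mem_univ i)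
    have h2 := (div_le_iff₀ (sub_pos.2 (hlt i))).1 h1
    rw [mul_sub] at h2
    linarith
  obtain ⟨C, hC0, hC⟩ := hC
  have hpart : ∀ N i, ∑ n ∈ Finset.range N, d n i ≤ ENNReal.ofReal (C * v i) := by
    intro N
    induction N with
    | zero => simp
    | succ N ih =>
      intro i
      calc ∑ n ∈ Finset.range (N + 1), d n i
          = d 0 i + ∑ j, ENNReal.ofReal (A i j) * ∑ n ∈ Finset.range N, d n j := by
            rw [Finset.sum_range_succ', add_comm]
            simp only [hrec, Finset.mul_sum]
            rw [Finset.sum_comm]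
        _ ≤ d 0 i + ∑ j, ENNReal.ofReal (A i j) * ENNReal.ofReal (C * v j) := by
            gcongr with j _
            exact ih j
        _ = ENNReal.ofReal ((d 0 i).toReal + C * ∑ j, A i j * v j) := by
            have hnn : ∀ j, 0 ≤ A i j * (C * v j) := fun j =>
              mul_nonneg (hA i j) (mul_nonneg hC0 (hv j).le)
            have hCs : C * ∑ j, A i j * v j = ∑ j, A i j * (C * v j) := by
              rw [Finset.mul_sum]
              exact Finset.sum_congr rfl fun j _ => by ring
            rw [hCs, ENNReal.ofReal_add ENNReal.toReal_nonneg (Finset.sum_nonneg fun j _ => hnn j),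
              ENNReal.ofReal_toReal (h0 i), ENNReal.ofReal_sum_of_nonneg fun j _ => hnn j]
            simp only [ENNReal.ofReal_mul (hA i _)]
        _ ≤ ENNReal.ofReal (C * v i) := ENNReal.ofReal_le_ofReal (hC i)
  exact ne_top_of_le_ne_top ENNReal.ofReal_ne_top (ENNReal.tsum_le_of_sum_range_le fun N => hpart N i)

/-! ### The finite quotient graph -/

/-- The sets `P 0 = {w}, P 1, …, P m` partition the vertices, and `E` is the pullback of the edge
relation `EH` on the indices. -/
structure IsQuotient (E : V → V → Prop) (w : V) {m : ℕ} (P : Fin (m + 1) → Set V)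
    (EH : Fin (m + 1) → Fin (m + 1) → Prop) : Prop where
  zero : P 0 = {w}
  disj : ∀ i j, i ≠ j → Disjoint (P i) (P j)
  cover : ∀ v, ∃ i, v ∈ P i
  edge : ∀ i j, ∀ v ∈ P i, ∀ v' ∈ P j, (E v v' ↔ EH i j)

section Quotient

variable {E : V → V → Prop} {w : V} {m : ℕ} {P : Fin (m + 1) → Set V}
  {EH : Fin (m + 1) → Fin (m + 1) → Prop}

lemma IsQuotient.edge_congr (h : IsQuotient E w P EH) {i : Fin (m + 1)} {v v' : V} (hv : v ∈ P i)
    (hv' : v' ∈ P i) (u : V) : E v u ↔ E v' u := by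
  obtain ⟨j, hj⟩ := h.cover u
  rw [h.edge i j v hv u hj, h.edge i j v' hv' u hj]

lemma IsQuotient.ne (h : IsQuotient E w P EH) {j : Fin m} {u : V} (hu : u ∈ P j.succ) : u ≠ w := by
  rintro rfl
  exact (h.disj 0 j.succ (Fin.succ_ne_zero j).symm).le_bot ⟨by rw [h.zero]; rfl, hu⟩

lemma IsQuotient.returnWeight_succ (h : IsQuotient E w P EH) (g : V → ℝ≥0∞) {ρ : Fin m → V}
    (hρ : ∀ j, ρ j ∈ P j.succ) {i : Fin (m + 1)} {v : V} (hv : v ∈ P i) (n : ℕ) :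
    returnWeight E w g (n + 1) v = ∑ j : Fin m, if EH i j.succ then
      (∑' u : P j.succ, g u) * returnWeight E w g n (ρ j) else 0 := by
  rw [returnWeight, tsum_partition h.disj h.cover, Fin.sum_univ_succ]
  have h0 : ∑' u : P 0, (if E v u ∧ (u : V) ≠ w then g u * returnWeight E w g n u else 0) = 0 := by
    refine ENNReal.tsum_eq_zero.2 fun u => if_neg fun hu => hu.2 ?_
    have : (u : V) ∈ ({w} : Set V) := h.zero ▸ u.2
    exact this
  rw [h0, zero_add]
  refine Finset.sum_congr rfl fun j _ => ?_
  have hcond : ∀ u : P j.succ, (E v u ∧ (u : V) ≠ w) ↔ EH i j.succ := fun u => by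
    rw [h.edge i j.succ v hv u u.2]
    exact and_iff_left (h.ne u.2)
  simp only [hcond]
  split_ifs
  · rw [← ENNReal.tsum_mul_right]
    exact tsum_congr fun u => by
      rw [returnWeight_congr E w g (h.edge_congr u.2 (hρ j))]
  · simp

/-- The matrix `A(x) = (α_{ij}(x))` for `1 ≤ i, j ≤ m`: the rows and columns of the class `{w}` are
left out. -/
noncomputable def transferMatrix (f : V → ℝ) (P : Fin (m + 1) → Set V)
    (EH : Fin (m + 1) → Fin (m + 1) → Prop) (x : ℝ) : Matrix (Fin m) (Fin m) ℝ :=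
  fun i j => if EH i.succ j.succ then alphaR f (P i.succ) x else 0

lemma Mmat_eq (f : V → ℝ) (x : ℝ) : Mmat f P EH x = transferMatrix f P EH x - 1 := by
  ext i j
  simp [Mmat, transferMatrix, Matrix.one_apply]

lemma alphaR_nonneg (f : V → ℝ) (S : Set V) {x : ℝ} (hx : 0 ≤ x) : 0 ≤ alphaR f S x :=
  tsum_nonneg fun _ => Real.rpow_nonneg hx _

lemma transferMatrix_nonneg (f : V → ℝ) {x : ℝ} (hx : 0 ≤ x) (i j : Fin m) :
    0 ≤ transferMatrix f P EH x i j := by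
  unfold transferMatrix
  split_ifs
  exacts [alphaR_nonneg f _ hx, le_rfl]

/-- With `dₙ i = α_i(x) Dₙ(V_i)`, the recursion `dₙ₊₁ = A(x) dₙ`. -/
lemma IsQuotient.weight_succ (h : IsQuotient E w P EH) (f : V → ℝ) {x : ℝ} (hx : 0 ≤ x)
    {ρ : Fin m → V} (hρ : ∀ j, ρ j ∈ P j.succ) (hfin : ∀ j : Fin m, alphaE f (P j.succ) x ≠ ∞)
    (n : ℕ) (i : Fin m) :
    alphaE f (P i.succ) x * returnWeight E w (fun v => ENNReal.ofReal (x ^ f v)) (n + 1) (ρ i) =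
      ∑ j, ENNReal.ofReal (transferMatrix f P EH x i j) *
        (alphaE f (P j.succ) x *
          returnWeight E w (fun v => ENNReal.ofReal (x ^ f v)) n (ρ j)) := by
  rw [h.returnWeight_succ _ hρ (hρ i), Finset.mul_sum]
  refine Finset.sum_congr rfl fun j _ => ?_
  unfold transferMatrix
  split_ifs
  · rw [alphaR_eq f _ hx, ENNReal.ofReal_toReal (hfin i)]
    rfl
  · simp

lemma alphaE_ne_top {f : V → ℝ} {x : ℝ} (hF : FSummable f x) (S : Set V) : alphaE f S x ≠ ∞ :=
  Summable.tsum_ofReal_ne_top (Summable.subtype hF S)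

lemma IsQuotient.phiSummable_of_hasSuper (h : IsQuotient E w P EH) {f : V → ℝ}
    (hf : ∀ v, 0 < f v) (hne : ∀ i, (P i).Nonempty) {x : ℝ} (hx : 0 ≤ x) (hF : FSummable f x)
    (hA : HasSuper (transferMatrix f P EH x)) : phiSummable E f w x := by
  choose ρ hρ using fun j : Fin m => hne j.succ
  rw [phiSummable_iff E f w hx, phi_eq E f hf w hx]
  refine ENNReal.mul_ne_top ENNReal.ofReal_ne_top ?_
  have hfin := fun j : Fin m => alphaE_ne_top hF (P j.succ)
  set g : V → ℝ≥0∞ := fun v => ENNReal.ofReal (x ^ f v) with hg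
  have hd := tsum_ne_top_of_hasSuper (transferMatrix_nonneg f hx) hA
    (fun n i => alphaE f (P i.succ) x * returnWeight E w g n (ρ i))
    (fun i => ENNReal.mul_ne_top (hfin i) (by unfold returnWeight; split_ifs <;> simp))
    (h.weight_succ f hx hρ hfin)
  rw [tsum_eq_zero_add' ENNReal.summable]
  refine ENNReal.add_ne_top.2 ⟨by unfold returnWeight; split_ifs <;> simp, ?_⟩
  have hw : w ∈ P 0 := by rw [h.zero]; rfl
  simp only [h.returnWeight_succ g hρ hw]
  rw [Summable.tsum_finsetSum fun _ _ => ENNReal.summable]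
  refine ENNReal.sum_ne_top.2 fun j _ => ne_top_of_le_ne_top (hd j) ?_
  refine ENNReal.tsum_le_tsum fun n => ?_
  split_ifs
  exacts [le_rfl, bot_le]

/-- An edge from `v` into a class reaches all its vertices, so a finite total weight at `v` bounds
the generating function of that class. -/
lemma IsQuotient.class_totalWeight_le (h : IsQuotient E w P EH) (g : V → ℝ≥0∞) {j : Fin m}
    {u₀ : V} (hu₀ : u₀ ∈ P j.succ) {i : Fin (m + 1)} {v : V} (hv : v ∈ P i) (hij : EH i j.succ) :
    (∑' u : P j.succ, g u) * totalWeight E w g u₀ ≤ totalWeight E w g v := by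
  rw [totalWeight_eq E w g v, ← ENNReal.tsum_mul_right]
  refine le_trans (le_trans (le_of_eq ?_) (ENNReal.tsum_comp_le_tsum_of_injective
    (Subtype.val_injective (p := fun u => u ∈ P j.succ)) _)) le_add_self
  refine tsum_congr fun u => ?_
  rw [if_pos ⟨(h.edge i j.succ v hv u u.2).2 hij, h.ne u.2⟩]
  congr 1
  exact tsum_congr fun n => returnWeight_congr E w g (h.edge_congr hu₀ u.2) n

/-- The case `x = 0` is left out because the weights vanish there. -/
lemma IsQuotient.of_phiSummable (h : IsQuotient E w P EH) {f : V → ℝ}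
    (hf : ∀ v, 0 < f v) (hne : ∀ i, (P i).Nonempty)
    (hconn : ∀ u v : V, Relation.ReflTransGen E u v) {x : ℝ} (hx : 0 < x)
    (hφ : phiSummable E f w x) : FSummable f x ∧ (Mmat f P EH x).det ≠ 0 := by
  choose ρ hρ using fun j : Fin m => hne j.succ
  rw [phiSummable_iff E f w hx.le, phi_eq E f hf w hx.le] at hφ
  set g : V → ℝ≥0∞ := fun v => ENNReal.ofReal (x ^ f v) with hg
  have hg0 : ∀ v, g v ≠ 0 := fun v => (ENNReal.ofReal_pos.2 (Real.rpow_pos_of_pos hx _)).ne'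
  have hsw : totalWeight E w g w ≠ ∞ := fun ht => hφ (by
    change g w * totalWeight E w g w = ∞
    rw [ht, ENNReal.mul_top (hg0 w)])
  have hsfin := totalWeight_ne_top hg0 hconn hsw
  have hspos : ∀ j, totalWeight E w g (ρ j) ≠ 0 := fun j =>
    totalWeight_ne_zero hg0 hconn (h.ne (hρ j))
  have hfin : ∀ j : Fin m, alphaE f (P j.succ) x ≠ ∞ := by
    intro j hj
    obtain ⟨v, -, hv⟩ := (Relation.ReflTransGen.cases_tail (hconn w (ρ j))).resolve_left
      (h.ne (hρ j))
    obtain ⟨i, hi⟩ := h.cover v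
    have hij := (h.edge i j.succ v hi _ (hρ j)).1 hv
    have hle : alphaE f (P j.succ) x * totalWeight E w g (ρ j) ≤ totalWeight E w g v :=
      h.class_totalWeight_le g (hρ j) hi hij
    rw [hj, ENNReal.top_mul (hspos j)] at hle
    exact hsfin v (top_le_iff.1 hle)
  refine ⟨?_, ?_⟩
  · rw [fSummable_iff f hx.le, tsum_partition h.disj h.cover, Fin.sum_univ_succ]
    refine ENNReal.add_ne_top.2 ⟨?_, ENNReal.sum_ne_top.2 fun j _ => hfin j⟩
    rw [h.zero, tsum_singleton w fun v => ENNReal.ofReal (x ^ f v)]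
    exact ENNReal.ofReal_ne_top
  · rw [Mmat_eq]
    set d : ℕ → Fin m → ℝ≥0∞ := fun n i => alphaE f (P i.succ) x * returnWeight E w g n (ρ i)
      with hd
    have hsum : ∀ i, ∑' n, d n i = alphaE f (P i.succ) x * totalWeight E w g (ρ i) := fun i =>
      ENNReal.tsum_mul_left
    have hsum_top : ∀ i, ∑' n, d n i ≠ ∞ := fun i => by
      rw [hsum]
      exact ENNReal.mul_ne_top (hfin i) (hsfin _)
    have hd_top : ∀ n i, d n i ≠ ∞ := fun n i => ENNReal.ne_top_of_tsum_ne_top (hsum_top i) n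
    refine det_ne_zero_of_summable (transferMatrix_nonneg f hx.le) (fun n i => (d n i).toReal)
      (fun i => ENNReal.summable_toReal (hsum_top i)) (fun n i => ?_) fun i => ?_
    · rw [show d (n + 1) i = _ from h.weight_succ f hx.le hρ hfin n i,
        ENNReal.toReal_sum fun j _ => ENNReal.mul_ne_top ENNReal.ofReal_ne_top (hd_top n j)]
      refine Finset.sum_congr rfl fun j _ => ?_
      rw [ENNReal.toReal_mul, ENNReal.toReal_ofReal (transferMatrix_nonneg f hx.le i j)]
    · rw [← ENNReal.tsum_toReal_eq fun n => hd_top n i]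
      refine ENNReal.toReal_pos ?_ (hsum_top i)
      rw [hsum]
      refine mul_ne_zero (fun h0 => ?_) (hspos i)
      exact hg0 (ρ i) (ENNReal.tsum_eq_zero.1 h0 ⟨ρ i, hρ i⟩)

lemma transferMatrix_zero {f : V → ℝ} (hf : ∀ v, 0 < f v) : transferMatrix f P EH 0 = 0 := by
  ext i j
  simp [transferMatrix, alphaR, Real.zero_rpow (hf _).ne']

lemma continuousOn_transferMatrix {f : V → ℝ} (hf : ∀ v, 0 < f v) {x : ℝ} (hF : FSummable f x) :
    ContinuousOn (transferMatrix f P EH) (Set.Icc 0 x) := by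
  have hα : ∀ S : Set V, ContinuousOn (alphaR f S) (Set.Icc 0 x) := fun S => by
    refine continuousOn_tsum (u := fun v : S => x ^ f v)
      (fun v => (Real.continuous_rpow_const (hf v).le).continuousOn) (hF.subtype S) ?_
    intro v y hy
    rw [Real.norm_of_nonneg (Real.rpow_nonneg hy.1 _)]
    exact Real.rpow_le_rpow hy.1 hy.2 (hf v).le
  refine continuousOn_pi.2 fun i => continuousOn_pi.2 fun j => ?_
  unfold transferMatrix
  split_ifs
  exacts [hα _, continuousOn_const]

lemma hasSuper_transferMatrix {f : V → ℝ} (hf : ∀ v, 0 < f v) {x : ℝ} (hx : 0 ≤ x)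
    (hF : FSummable f x) (hdet : ∀ y, 0 ≤ y → y ≤ x → (Mmat f P EH y).det ≠ 0) :
    HasSuper (transferMatrix f P EH x) := by
  have : PreconnectedSpace (Set.Icc 0 x) :=
    isPreconnected_iff_preconnectedSpace.1 isPreconnected_Icc
  refine hasSuper_of_path (fun t : Set.Icc 0 x => transferMatrix f P EH t)
    (continuousOn_iff_continuous_domRestrict.1 (continuousOn_transferMatrix hf hF))
    (fun t => transferMatrix_nonneg f t.2.1) (fun t => ?_) ⟨0, le_rfl, hx⟩
    (transferMatrix_zero hf) ⟨x, hx, le_rfl⟩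
  rw [← Mmat_eq]
  exact hdet t t.2.1 t.2.2

end Quotient

/-! ### The radius of convergence -/

lemma fSummable_mono {f : V → ℝ} (hf : ∀ v, 0 < f v) {x y : ℝ} (hx : 0 ≤ x) (hxy : x ≤ y)
    (h : FSummable f y) : FSummable f x :=
  Summable.of_nonneg_of_le (fun _ => Real.rpow_nonneg hx _)
    (fun v => Real.rpow_le_rpow hx hxy (hf v).le) h

lemma phiSummable_mono {E : V → V → Prop} {f : V → ℝ} (hf : ∀ v, 0 < f v) {w : V} {x y : ℝ}
    (hx : 0 ≤ x) (hxy : x ≤ y) (h : phiSummable E f w y) : phiSummable E f w x :=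
  Summable.of_nonneg_of_le (fun _ => Real.rpow_nonneg hx _)
    (fun _ => Real.rpow_le_rpow hx hxy (Finset.sum_nonneg fun _ _ => (hf _).le)) h

lemma sSup_eq_of_Ico_subset {S : Set ℝ} {z : ℝ} (h0 : (0 : ℝ) ∈ S)
    (hlt : ∀ x, 0 ≤ x → x < z → x ∈ S) (hle : ∀ x ∈ S, x ≤ z) : sSup S = z := by
  refine csSup_eq_of_forall_le_of_forall_lt_exists_gt ⟨0, h0⟩ hle fun c hc => ?_
  obtain ⟨d, hd1, hd2⟩ := exists_between hc
  rcases lt_or_ge d 0 with hd | hd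
  · exact ⟨0, h0, hd1.trans hd⟩
  · exact ⟨d, hlt d hd hd2, hd1⟩

/-- If `r(F_{f,V}) > 0`, then `r(φ_{G,f,w}) = x̃₀`. -/
theorem stmt4 [Countable V] (E : V → V → Prop) (f : V → ℝ) (w : V)
    (m : ℕ) (hm : 0 < m) (P : Fin (m + 1) → Set V)
    (EH : Fin (m + 1) → Fin (m + 1) → Prop)
    (hf : ∀ v, 0 < f v)
    (hconn : ∀ u v : V, Relation.ReflTransGen E u v)
    (hP0 : P 0 = {w})
    (hdisj : ∀ i j, i ≠ j → Disjoint (P i) (P j))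
    (hcover : ∀ v, ∃ i, v ∈ P i)
    (hne : ∀ i, (P i).Nonempty)
    (hEH : ∀ i j, ∀ v ∈ P i, ∀ v' ∈ P j, (E v v' ↔ EH i j))
    (hrF : 0 < rF f) :
    rPhi E f w = xtilde f P EH := by
  have hQ : IsQuotient E w P EH := ⟨hP0, hdisj, hcover, hEH⟩
  -- An unbounded set would have `sSup` equal to `0`.
  have hbdd : BddAbove {x : ℝ | 0 ≤ x ∧ FSummable f x} := by
    by_contra hb
    rw [rF, Real.sSup_of_not_bddAbove hb] at hrF
    exact lt_irrefl _ hrF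
  have hF : ∀ x, 0 ≤ x → x < rF f → FSummable f x := by
    intro x hx hxr
    have hne' : {x : ℝ | 0 ≤ x ∧ FSummable f x}.Nonempty :=
      ⟨0, le_rfl, by simp [FSummable, Real.zero_rpow (hf _).ne']⟩
    obtain ⟨y, hy, hxy⟩ := exists_lt_of_lt_csSup hne' hxr
    exact fSummable_mono hf hx hxy.le hy.2
  have hzero : phiSummable E f w 0 := by
    have : ∀ n (γ : Fin (n + 2) → V), fStar f n γ ≠ 0 := fun n γ =>
      (Finset.sum_pos (fun _ _ => hf _) Finset.univ_nonempty).ne'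
    simp [phiSummable, Real.zero_rpow (this _ _)]
  have hfin : ∀ x, 0 ≤ x → x < rF f → (∀ y, 0 ≤ y → y ≤ x → (Mmat f P EH y).det ≠ 0) →
      phiSummable E f w x := fun x hx hxr hdet =>
    hQ.phiSummable_of_hasSuper hf hne hx (hF x hx hxr)
      (hasSuper_transferMatrix hf hx (hF x hx hxr) hdet)
  have hle : ∀ x, 0 ≤ x → phiSummable E f w x → x ≤ rF f := by
    intro x hx hφ
    rcases hx.eq_or_lt with rfl | hx'
    · exact hrF.le
    · exact le_csSup hbdd ⟨hx, (hQ.of_phiSummable hf hne hconn hx' hφ).1⟩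
  unfold xtilde rPhi
  split_ifs with hdet
  · exact sSup_eq_of_Ico_subset ⟨le_rfl, hzero⟩
      (fun x hx hxr => ⟨hx, hfin x hx hxr fun y hy hyx => hdet y hy (hyx.trans_lt hxr)⟩)
      fun x hx => hle x hx.1 hx.2
  · push Not at hdet
    set Z := {x : ℝ | 0 ≤ x ∧ x < rF f ∧ (Mmat f P EH x).det = 0} with hZ
    have hZne : Z.Nonempty := hdet
    have hZb : BddBelow Z := ⟨0, fun x hx => hx.1⟩
    refine sSup_eq_of_Ico_subset ⟨le_rfl, hzero⟩ ?_ ?_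
    · intro x hx hxz
      have hxr : x < rF f := by
        obtain ⟨z, hz⟩ := hZne
        exact (hxz.trans_le (csInf_le hZb hz)).trans hz.2.1
      refine ⟨hx, hfin x hx hxr fun y hy hyx h0 => ?_⟩
      exact (hyx.trans_lt hxz).not_ge (csInf_le hZb ⟨hy, hyx.trans_lt hxr, h0⟩)
    · rintro x ⟨hx, hφ⟩
      refine le_csInf hZne fun z hz => ?_
      by_contra! hzx
      -- A zero of `det M` is not `0`, since `M(0) = -1`.
      rcases hz.1.eq_or_lt with rfl | hz0
      · have := hz.2.2
        rw [Mmat_eq, transferMatrix_zero hf, zero_sub, Matrix.det_neg] at this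
        simp at this
      · exact (hQ.of_phiSummable hf hne hconn hz0 (phiSummable_mono hf hz.1 hzx.le hφ)).2 hz.2.2
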